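/- Every subspace of ℂᵐ ⊗ ℂⁿ of dimension strictly greater than (m−1)(n−1) contains a nonzero product vector x ⊗ y. -/

import Mathlib

/-!
The proof is the projective dimension count, carried out on the affine cone over the Segre variety.
The coordinate ring of the cone is the subring `R` of `ℂ[x₁, …, xₘ, y₁, …, yₙ]` generated by the
products `xᵢ yⱼ`, and its augmentation ideal has height at least `m + n - 1`: killing the variables
`x₁, …, xₘ₋₁, y₁, …, yₙ` one after the other gives an explicit strict chain of primes of `R`
(`le_height_killIdeal`).

A subspace `E` of codimension `k` is cut out by `k` linear forms, hence defines an ideal of `R` with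
`k` generators. If `E` contained no nonzero product vector, the common zeros of these forms on the
cone would reduce to the origin, so by the Nullstellensatz the augmentation ideal would be a minimal
prime over that ideal, and Krull's height theorem would give `m + n - 1 ≤ k`. When
`dim E > (m - 1)(n - 1)`, however, `k = m n - dim E ≤ m + n - 2`.
-/

namespace Segre

open MvPolynomial

/-- The parametrization `z_{ij} ↦ xᵢ yⱼ` of the Segre cone, on coordinate rings. The variables
`xᵢ` and `yⱼ` are indexed by the two summands of `Fin m ⊕ Fin n`. -/
noncomputable def param (m n : ℕ) :
    MvPolynomial (Fin m × Fin n) ℂ →ₐ[ℂ] MvPolynomial (Fin m ⊕ Fin n) ℂ :=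
  aeval fun p => X (Sum.inl p.1) * X (Sum.inr p.2)

/-- The coordinate ring of the Segre cone. -/
noncomputable abbrev coneRing (m n : ℕ) : Subalgebra ℂ (MvPolynomial (Fin m ⊕ Fin n) ℂ) :=
  (param m n).range

/-- The variables killed at step `t` of the chain: the first `t` ones in the order
`x₀, …, x_{m-2}, y₀, …, y_{n-1}`. The variable `x_{m-1}` is never killed. -/
def killed (m n t : ℕ) : Fin m ⊕ Fin n → Prop
  | Sum.inl i => i.val < t ∧ i.val < m - 1
  | Sum.inr j => j.val + (m - 1) < t

open Classical in
/-- The substitution of `0` for the variables killed at step `t`. -/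
noncomputable def kill (m n t : ℕ) :
    MvPolynomial (Fin m ⊕ Fin n) ℂ →ₐ[ℂ] MvPolynomial (Fin m ⊕ Fin n) ℂ :=
  aeval fun v => if killed m n t v then 0 else X v

/-- The prime of the cone ring consisting of the elements that vanish once the variables killed at
step `t` are set to `0`. -/
noncomputable def killIdeal (m n t : ℕ) : Ideal (coneRing m n) :=
  RingHom.ker ((kill m n t).comp (coneRing m n).val)

instance (m n t : ℕ) : (killIdeal m n t).IsPrime := RingHom.ker_isPrime _

lemma mem_killIdeal {m n t : ℕ} {r : coneRing m n} :
    r ∈ killIdeal m n t ↔ kill m n t (r : MvPolynomial (Fin m ⊕ Fin n) ℂ) = 0 := Iff.rfl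

lemma kill_kill (m n t : ℕ) (f : MvPolynomial (Fin m ⊕ Fin n) ℂ) :
    kill m n (t + 1) (kill m n t f) = kill m n (t + 1) f := by
  suffices h : (kill m n (t + 1)).comp (kill m n t) = kill m n (t + 1) from DFunLike.congr_fun h f
  apply MvPolynomial.algHom_ext
  intro v
  have hmono : killed m n t v → killed m n (t + 1) v := by
    rcases v with i | j <;> simp only [killed] <;> omega
  by_cases h : killed m n t v
  · simp [kill, h, hmono h]
  · simp [kill, h]

lemma killIdeal_le_succ (m n t : ℕ) : killIdeal m n t ≤ killIdeal m n (t + 1) := by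
  intro r hr
  rw [mem_killIdeal] at hr ⊢
  rw [← kill_kill, hr, map_zero]

lemma param_X_mem_killIdeal_iff {m n t : ℕ} (i : Fin m) (j : Fin n) :
    (param m n).rangeRestrict (X (i, j)) ∈ killIdeal m n t ↔
      killed m n t (Sum.inl i) ∨ killed m n t (Sum.inr j) := by
  rw [mem_killIdeal]
  change kill m n t (param m n (X (i, j))) = 0 ↔ _
  by_cases h₁ : killed m n t (Sum.inl i) <;> by_cases h₂ : killed m n t (Sum.inr j) <;>
    simp [param, kill, h₁, h₂]

lemma killIdeal_lt_succ {m n t : ℕ} (hm : 0 < m) (hn : 0 < n) (ht : t < m + n - 1) :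
    killIdeal m n t < killIdeal m n (t + 1) := by
  suffices h : ∃ (i : Fin m) (j : Fin n),
      (killed m n (t + 1) (Sum.inl i) ∨ killed m n (t + 1) (Sum.inr j)) ∧
      ¬ (killed m n t (Sum.inl i) ∨ killed m n t (Sum.inr j)) by
    obtain ⟨i, j, h₁, h₂⟩ := h
    rw [← param_X_mem_killIdeal_iff] at h₁ h₂
    exact lt_of_le_of_ne (killIdeal_le_succ m n t) fun h => h₂ (h ▸ h₁)
  -- The variable killed at this step, times one that survives it or, at the end, `x_{m-1}`.
  by_cases h : t < m - 1
  · exact ⟨⟨t, by omega⟩, ⟨n - 1, by omega⟩, by simp only [killed]; omega⟩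
  · exact ⟨⟨m - 1, by omega⟩, ⟨t - (m - 1), by omega⟩, by simp only [killed]; omega⟩

lemma le_height_killIdeal {m n : ℕ} (hm : 0 < m) (hn : 0 < n) (t : ℕ) (ht : t ≤ m + n - 1) :
    (t : ℕ∞) ≤ (killIdeal m n t).height := by
  induction t with
  | zero => simp
  | succ t ih =>
    have h := Ideal.height_add_one_le_of_lt_of_isPrime
      (killIdeal_lt_succ hm hn (t := t) (by omega))
    push_cast
    exact (add_le_add_left (ih (by omega)) 1).trans h

/-- The ideals of the chain lie in the augmentation ideal, that is, their elements vanish at the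
origin of the cone. -/
lemma aeval_zero_of_mem_killIdeal {m n t : ℕ} {f : MvPolynomial (Fin m × Fin n) ℂ}
    (hf : (param m n).rangeRestrict f ∈ killIdeal m n t) :
    aeval (0 : Fin m × Fin n → ℂ) f = 0 := by
  have h : ((aeval (0 : Fin m ⊕ Fin n → ℂ)).comp (kill m n t)).comp (param m n) =
      (aeval (0 : Fin m × Fin n → ℂ) : MvPolynomial (Fin m × Fin n) ℂ →ₐ[ℂ] ℂ) := by
    apply MvPolynomial.algHom_ext
    rintro ⟨i, j⟩
    by_cases h₁ : killed m n t (Sum.inl i) <;> by_cases h₂ : killed m n t (Sum.inr j) <;>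
      simp [param, kill, h₁, h₂]
  rw [mem_killIdeal] at hf
  rw [← h]
  change aeval _ (kill m n t (param m n f)) = 0
  rw [show kill m n t (param m n f) = 0 from hf, map_zero]

/-- A nonzero matrix with vanishing `2 × 2` minors is a product vector. -/
lemma exists_eq_mul {m n : ℕ} {z : Fin m × Fin n → ℂ} (hz : z ≠ 0)
    (h : ∀ i j k l, z (i, j) * z (k, l) = z (i, l) * z (k, j)) :
    ∃ (x : Fin m → ℂ) (y : Fin n → ℂ), x ≠ 0 ∧ y ≠ 0 ∧
      (fun p : Fin m × Fin n => x p.1 * y p.2) = z := by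
  obtain ⟨⟨a, b⟩, hab⟩ := Function.ne_iff.mp hz
  have hab : z (a, b) ≠ 0 := hab
  refine ⟨fun i => z (i, b), fun j => z (a, j) / z (a, b), ?_, ?_, ?_⟩
  · exact fun h0 => hab (congrFun h0 a)
  · exact fun h0 => (div_ne_zero hab hab) (congrFun h0 b)
  · funext ⟨i, j⟩
    have := h i b a j
    simp only
    field_simp
    linear_combination this

/-- The linear form `∑ₚ L(eₚ)ᵢ zₚ`, the `i`-th coordinate of the linear map `L`. -/
noncomputable def form {m n k : ℕ} (L : (Fin m × Fin n → ℂ) →ₗ[ℂ] (Fin k → ℂ)) (i : Fin k) :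
    MvPolynomial (Fin m × Fin n) ℂ :=
  ∑ p, C (L (Pi.single p 1) i) * X p

lemma aeval_form {m n k : ℕ} (L : (Fin m × Fin n → ℂ) →ₗ[ℂ] (Fin k → ℂ)) (i : Fin k)
    (z : Fin m × Fin n → ℂ) : aeval z (form L i) = L z i := by
  conv_rhs => rw [LinearMap.pi_apply_eq_sum_univ L z]
  simp only [form, map_sum, map_mul, aeval_X, Finset.sum_apply, Pi.smul_apply, smul_eq_mul]
  refine Finset.sum_congr rfl fun p _ => ?_
  rw [mul_comm]
  congr 1
  simp only [algHom_C, Algebra.algebraMap_self, RingHom.id_apply]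
  have h : (Pi.single p 1 : Fin m × Fin n → ℂ) = fun q => if p = q then 1 else 0 := by
    funext q
    simp [Pi.single_apply, eq_comm]
  rw [h]

/-- Fewer than `m + n - 1` linear equations on `m × n` matrices have a solution of rank one. -/
lemma exists_product_of_lt {m n k : ℕ} (hm : 0 < m) (hn : 0 < n) (hk : k < m + n - 1)
    (L : (Fin m × Fin n → ℂ) →ₗ[ℂ] (Fin k → ℂ)) :
    ∃ (x : Fin m → ℂ) (y : Fin n → ℂ), x ≠ 0 ∧ y ≠ 0 ∧
      L (fun p : Fin m × Fin n => x p.1 * y p.2) = 0 := by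
  by_contra hno
  let π := (param m n).rangeRestrict
  have hπ : Function.Surjective π := (param m n).rangeRestrict_surjective
  have : IsNoetherianRing (coneRing m n) := isNoetherianRing_of_surjective _ _ π.toRingHom hπ
  let P := killIdeal m n (m + n - 1)
  let s : Set (coneRing m n) := Set.range fun i => π (form L i)
  have hXP (i : Fin m) (j : Fin n) : π (X (i, j)) ∈ P := by
    refine (param_X_mem_killIdeal_iff i j).mpr (Or.inr ?_)
    simp only [killed]
    omega
  have hsP : Ideal.span s ≤ P := by
    rw [Ideal.span_le]
    rintro _ ⟨i, rfl⟩
    simp only [form, map_sum, map_mul]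
    exact Ideal.sum_mem _ fun p _ => Ideal.mul_mem_left _ _ (hXP p.1 p.2)
  obtain ⟨q, hq, hqP⟩ := Ideal.exists_minimalPrimes_le hsP
  have : q.IsPrime := hq.1.1
  let Q := q.comap π
  have hzero (z : Fin m × Fin n → ℂ) (hz : z ∈ zeroLocus ℂ Q) : z = 0 := by
    by_contra hz0
    -- The minors lie in `Q` because they already vanish in the cone ring.
    have hminor (i j k l) : z (i, j) * z (k, l) = z (i, l) * z (k, j) := by
      have hmem : X (i, j) * X (k, l) - X (i, l) * X (k, j) ∈ Q := by
        have h0 : π (X (i, j) * X (k, l) - X (i, l) * X (k, j)) = 0 := by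
          apply Subtype.ext
          change param m n _ = 0
          simp only [param, map_sub, map_mul, aeval_X]
          ring
        rw [Ideal.mem_comap, h0]
        exact q.zero_mem
      simpa [sub_eq_zero] using hz _ hmem
    obtain ⟨x, y, hx, hy, hxy⟩ := exists_eq_mul hz0 hminor
    refine hno ⟨x, y, hx, hy, ?_⟩
    rw [hxy]
    funext i
    rw [← aeval_form]
    exact hz _ (hq.1.2 (Ideal.subset_span ⟨i, rfl⟩))
  have hPq : P ≤ q := by
    intro r hr
    obtain ⟨f, rfl⟩ := hπ r
    suffices h : f ∈ Q from h
    rw [← IsPrime.vanishingIdeal_zeroLocus (K := ℂ) Q]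
    intro z hz
    rw [hzero z hz]
    exact aeval_zero_of_mem_killIdeal hr
  have hle : q.height ≤ s.ncard :=
    Ideal.height_le_card_of_mem_minimalPrimes_span (Set.finite_range _) hq
  have hcard : s.ncard ≤ k := by
    rw [show s = _ from Set.image_univ.symm]
    exact (Set.ncard_image_le Set.finite_univ).trans (by simp [Set.ncard_univ])
  have hheight : ((m + n - 1 : ℕ) : ℕ∞) ≤ (k : ℕ∞) :=
    (le_height_killIdeal hm hn _ le_rfl).trans
      ((Ideal.height_mono hPq).trans (hle.trans (by exact_mod_cast hcard)))
  have : m + n - 1 ≤ k := by exact_mod_cast hheight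
  omega

end Segre

/-- Every subspace of `ℂᵐ ⊗ ℂⁿ` of dimension strictly greater than `(m-1)(n-1)`
contains a nonzero product vector `x ⊗ y`. -/
theorem exists_product_vector_of_dim_gt (m n : ℕ)
    (E : Submodule ℂ (Fin m × Fin n → ℂ))
    (h : (m - 1) * (n - 1) < Module.finrank ℂ E) :
    ∃ (x : Fin m → ℂ) (y : Fin n → ℂ), x ≠ 0 ∧ y ≠ 0 ∧
      (fun p : Fin m × Fin n => x p.1 * y p.2) ∈ E := by
  have hsum := E.finrank_quotient_add_finrank
  rw [Module.finrank_fintype_fun_eq_card, Fintype.card_prod, Fintype.card_fin,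
    Fintype.card_fin] at hsum
  have hm : 0 < m := by
    rcases m with _ | m
    · rw [Nat.zero_mul] at hsum
      omega
    · omega
  have hn : 0 < n := by
    rcases n with _ | n
    · rw [Nat.mul_zero] at hsum
      omega
    · omega
  have hk : Module.finrank ℂ ((Fin m × Fin n → ℂ) ⧸ E) < m + n - 1 := by
    obtain ⟨a, rfl⟩ := Nat.exists_eq_add_of_lt hm
    obtain ⟨b, rfl⟩ := Nat.exists_eq_add_of_lt hn
    simp only [zero_add, Nat.add_sub_cancel] at h hsum ⊢
    have : (a + 1) * (b + 1) = a * b + a + b + 1 := by ring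
    omega
  let e := (Module.finBasis ℂ ((Fin m × Fin n → ℂ) ⧸ E)).equivFun
  obtain ⟨x, y, hx, hy, hxy⟩ :=
    Segre.exists_product_of_lt hm hn hk (e.toLinearMap ∘ₗ E.mkQ)
  refine ⟨x, y, hx, hy, ?_⟩
  rw [← Submodule.Quotient.mk_eq_zero]
  exact e.map_eq_zero_iff.mp hxy
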